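/- Let W be a graphon, let p ∈ (0, 1/2), and define the graphon W_p(x,y) = (1−p) W(x,y) + p (1 − W(x,y)). Let g ∈ L∞([0,1]) with ∫₀¹ g(y) dy = 0, and let v be the solution of the continuum voting model IVP for the kernel (1−2p)·W with initial condition g. Then the function u defined by u(x,t) = e^{−pt} v(x,t) is the solution of the continuum voting model IVP for (W_p, g); consequently, if v reaches consensus on [0,1] then u reaches consensus on [0,1]. -/

import Mathlib

open MeasureTheory Filter Set

noncomputable section

/-- Lebesgue measure restricted to `[0,1]`. -/
def mu01 : Measure ℝ := volume.restrict (Set.Icc (0:ℝ) 1)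

/-- A kernel: a symmetric measurable function `[0,1]² → [-1,1]`. -/
def IsKernel (W : ℝ → ℝ → ℝ) : Prop :=
  Measurable (Function.uncurry W) ∧ (∀ x y, W x y = W y x) ∧
    ∀ x y, W x y ∈ Set.Icc (-1:ℝ) 1

/-- A graphon: a symmetric measurable function `[0,1]² → [0,1]`. -/
def IsGraphon (W : ℝ → ℝ → ℝ) : Prop :=
  Measurable (Function.uncurry W) ∧ (∀ x y, W x y = W y x) ∧
    ∀ x y, W x y ∈ Set.Icc (0:ℝ) 1

/-- `g ∈ L∞([0,1])`: measurable and essentially bounded on `[0,1]`. -/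
def IsLinf (g : ℝ → ℝ) : Prop :=
  Measurable g ∧ ∃ M : ℝ, ∀ᵐ x ∂mu01, |g x| ≤ M

/-- A solution of the continuum voting model IVP for `(W, g)`: a jointly measurable
function, essentially bounded on `[0,1] × [0,T]` for every `T > 0`, satisfying the
integral form of the IVP for every `t ≥ 0` and almost every `x ∈ [0,1]`. -/
def IsSolution (W : ℝ → ℝ → ℝ) (g : ℝ → ℝ) (u : ℝ → ℝ → ℝ) : Prop :=
  Measurable (Function.uncurry u) ∧
  (∀ T > (0:ℝ), ∃ M : ℝ, ∀ t ∈ Set.Icc (0:ℝ) T, ∀ᵐ x ∂mu01, |u x t| ≤ M) ∧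
  (∀ t ≥ (0:ℝ), ∀ᵐ x ∂mu01,
    u x t = g x + ∫ s in Set.Icc (0:ℝ) t, ∫ y in Set.Icc (0:ℝ) 1, W x y * (u y s - u x s))

/-- A bounded solution: essentially uniformly bounded over all times `t ≥ 0`. -/
def BoundedSolution (u : ℝ → ℝ → ℝ) : Prop :=
  ∃ M : ℝ, ∀ t ≥ (0:ℝ), ∀ᵐ x ∂mu01, |u x t| ≤ M

/-- `u` reaches consensus on `A`:
`lim_{t→∞} ess sup_{(x,y) ∈ A×A} |u(x,t) − u(y,t)| = 0`. -/
def ReachesConsensusOn (u : ℝ → ℝ → ℝ) (A : Set ℝ) : Prop :=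
  ∀ ε > (0:ℝ), ∃ T : ℝ, ∀ t ≥ T,
    ∀ᵐ p : ℝ × ℝ ∂((volume.restrict A).prod (volume.restrict A)),
      |u p.1 t - u p.2 t| ≤ ε

open Classical in
/-- `u*(x) = lim_{t→∞} u(x,t)` where the limit exists, and `0` otherwise. -/
def uStar (u : ℝ → ℝ → ℝ) (x : ℝ) : ℝ :=
  if h : ∃ L : ℝ, Filter.Tendsto (fun t => u x t) Filter.atTop (nhds L)
  then h.choose else 0

/-- The normalised degree function of a kernel. -/
def degW (W : ℝ → ℝ → ℝ) (x : ℝ) : ℝ := ∫ y in Set.Icc (0:ℝ) 1, W x y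

/-- The block `I_iⁿ = ((i−1)/n, i/n]` containing `x`, i.e. with `i = ⌈n x⌉`. -/
def blockIoc (n : ℕ) (x : ℝ) : Set ℝ :=
  Set.Ioc (((⌈(n : ℝ) * x⌉ : ℤ) : ℝ) / n - 1 / n) (((⌈(n : ℝ) * x⌉ : ℤ) : ℝ) / n)

/-- The block average of `g`: `g_n(x) = n ∫_{I_iⁿ} g` for `x ∈ I_iⁿ`. -/
def blockAvgG (n : ℕ) (g : ℝ → ℝ) (x : ℝ) : ℝ :=
  (n : ℝ) * ∫ y in blockIoc n x, g y

/-- The block average of `W`: `W_n(x,y) = n² ∫_{I_iⁿ × I_jⁿ} W` for `(x,y) ∈ I_iⁿ × I_jⁿ`. -/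
def blockAvgW (n : ℕ) (W : ℝ → ℝ → ℝ) (x y : ℝ) : ℝ :=
  (n : ℝ) ^ 2 * ∫ p in (blockIoc n x) ×ˢ (blockIoc n y), W p.1 p.2

/-- The `L²([0,1])` norm. -/
def L2normI (f : ℝ → ℝ) : ℝ := Real.sqrt (∫ x in Set.Icc (0:ℝ) 1, (f x) ^ 2)

/-- The `L²([0,1]²)` norm. -/
def L2normSq (F : ℝ → ℝ → ℝ) : ℝ :=
  Real.sqrt (∫ p in (Set.Icc (0:ℝ) 1) ×ˢ (Set.Icc (0:ℝ) 1), (F p.1 p.2) ^ 2)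

/-- `A` is a twin-set of `W`. -/
def IsTwinSet (W : ℝ → ℝ → ℝ) (A : Set ℝ) : Prop :=
  MeasurableSet A ∧ A ⊆ Set.Icc (0:ℝ) 1 ∧ 0 < volume A ∧
  ∃ a : ℝ → ℝ → ℝ, ∀ x ∈ A, ∀ x' ∈ A,
    ∀ᵐ y ∂mu01, W x y = a x x' * W x' y

/-- `A` is a maximal twin-set of `W`. -/
def IsMaximalTwinSet (W : ℝ → ℝ → ℝ) (A : Set ℝ) : Prop :=
  IsTwinSet W A ∧ ∀ B : Set ℝ, IsTwinSet W B → A ⊆ B → volume (symmDiff B A) = 0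

/-- A kernel is connected if every measurable `S ⊆ [0,1]` with `0 < λ(S) < 1` satisfies
`∫_{S × ([0,1]∖S)} |W| > 0`. -/
def ConnectedKernel (W : ℝ → ℝ → ℝ) : Prop :=
  ∀ S : Set ℝ, MeasurableSet S → S ⊆ Set.Icc (0:ℝ) 1 →
    0 < volume S → volume S < 1 →
    0 < ∫ p in S ×ˢ (Set.Icc (0:ℝ) 1 \ S), |W p.1 p.2|

/-- A twin-graphon: a graphon with finitely many maximal twin-sets covering `[0,1]`
up to a null set. -/
def IsTwinGraphon (W : ℝ → ℝ → ℝ) : Prop :=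
  IsGraphon W ∧ ∃ (n : ℕ) (A : Fin n → Set ℝ),
    (∀ i, IsMaximalTwinSet W (A i)) ∧
    volume (symmDiff (Set.Icc (0:ℝ) 1) (⋃ i, A i)) = 0


instance mu01_prob : IsProbabilityMeasure mu01 := by
  constructor
  simp [mu01]

lemma ibp_aux (p c t : ℝ) (ht : 0 ≤ t) (f : ℝ → ℝ) (hf : IntegrableOn f (Set.Icc 0 t)) :
    Real.exp (-p * t) * (c + ∫ s in Set.Icc (0:ℝ) t, f s) =
      c + ∫ s in Set.Icc (0:ℝ) t,
        Real.exp (-p * s) * (f s - p * (c + ∫ r in Set.Icc (0:ℝ) s, f r)) := by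
  have hfi : IntervalIntegrable f volume 0 t := by
    rw [intervalIntegrable_iff_integrableOn_Icc_of_le ht]; exact hf
  have hG : AbsolutelyContinuousOnInterval (fun s => ∫ r in (0:ℝ)..s, f r) 0 t :=
    hfi.absolutelyContinuousOnInterval_intervalIntegral (c := 0) (by simp)
  have hC : AbsolutelyContinuousOnInterval (fun _ : ℝ => c) 0 t :=
    (LipschitzWith.const c).lipschitzOnWith.absolutelyContinuousOnInterval
  have hG' : AbsolutelyContinuousOnInterval (fun s => c + ∫ r in (0:ℝ)..s, f r) 0 t := hC.add hG
  have hE : AbsolutelyContinuousOnInterval (fun s => Real.exp (-p * s)) 0 t := by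
    have h1 : ContDiff ℝ 1 (fun s => Real.exp (-p * s)) := by fun_prop
    obtain ⟨K, hK⟩ := h1.contDiffOn.exists_lipschitzOnWith (s := Set.uIcc 0 t) (by simp)
      (convex_uIcc 0 t) isCompact_uIcc
    exact hK.absolutelyContinuousOnInterval
  have key := hE.integral_deriv_mul_eq_sub hG'
  have h2 : ∫ s in Set.Icc (0:ℝ) t,
        Real.exp (-p * s) * (f s - p * (c + ∫ r in Set.Icc (0:ℝ) s, f r)) =
      ∫ s in (0:ℝ)..t, deriv (fun s => Real.exp (-p * s)) s * (c + ∫ r in (0:ℝ)..s, f r) +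
        Real.exp (-p * s) * deriv (fun s => c + ∫ r in (0:ℝ)..s, f r) s := by
    rw [integral_Icc_eq_integral_Ioc, ← intervalIntegral.integral_of_le ht]
    apply intervalIntegral.integral_congr_ae
    filter_upwards [hfi.ae_hasDerivAt_integral] with s hs hst
    have hd := (hs (Set.uIoc_subset_uIcc hst) 0 (by simp)).const_add c
    have he : HasDerivAt (fun s => Real.exp (-p * s)) (Real.exp (-p * s) * (-p * 1)) s :=
      ((hasDerivAt_id s).const_mul (-p)).exp
    have hs0 : 0 ≤ s := by rw [Set.uIoc_of_le ht] at hst; exact hst.1.le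
    rw [hd.deriv, he.deriv, integral_Icc_eq_integral_Ioc, ← intervalIntegral.integral_of_le hs0]
    ring
  rw [h2, key, integral_Icc_eq_integral_Ioc, ← intervalIntegral.integral_of_le ht]
  simp

/-- The right-hand side of the voting model. -/
def vF (K v : ℝ → ℝ → ℝ) (x s : ℝ) : ℝ := ∫ y in Set.Icc (0:ℝ) 1, K x y * (v y s - v x s)

lemma vF_meas (K v : ℝ → ℝ → ℝ) (hK : Measurable (Function.uncurry K))
    (hv : Measurable (Function.uncurry v)) : Measurable (Function.uncurry (vF K v)) := by
  have h : Measurable (fun q : (ℝ × ℝ) × ℝ => K q.1.1 q.2 * (v q.2 q.1.2 - v q.1.1 q.1.2)) := by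
    have h1 : Measurable (fun q : (ℝ × ℝ) × ℝ => K q.1.1 q.2) :=
      hK.comp (f := fun q : (ℝ × ℝ) × ℝ => (q.1.1, q.2)) (by fun_prop)
    have h2 : Measurable (fun q : (ℝ × ℝ) × ℝ => v q.2 q.1.2) :=
      hv.comp (f := fun q : (ℝ × ℝ) × ℝ => (q.2, q.1.2)) (by fun_prop)
    have h3 : Measurable (fun q : (ℝ × ℝ) × ℝ => v q.1.1 q.1.2) :=
      hv.comp (f := fun q : (ℝ × ℝ) × ℝ => (q.1.1, q.1.2)) (by fun_prop)
    exact h1.mul (h2.sub h3)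
  exact (h.stronglyMeasurable.integral_prod_right' (ν := mu01)).measurable

lemma vInt_meas (F : ℝ → ℝ → ℝ) (hF : Measurable (Function.uncurry F)) :
    Measurable (fun q : ℝ × ℝ => ∫ r in Set.Icc (0:ℝ) q.2, F q.1 r) := by
  have h : Measurable (fun q : (ℝ × ℝ) × ℝ =>
      Set.indicator {q : (ℝ × ℝ) × ℝ | 0 ≤ q.2 ∧ q.2 ≤ q.1.2} (fun q => F q.1.1 q.2) q) := by
    apply Measurable.indicator
    · exact hF.comp (f := fun q : (ℝ × ℝ) × ℝ => (q.1.1, q.2)) (by fun_prop)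
    · exact (measurableSet_le measurable_const measurable_snd).inter
        (measurableSet_le measurable_snd (by fun_prop))
  have := (h.stronglyMeasurable.integral_prod_right' (ν := (volume : Measure ℝ))).measurable
  convert this using 2 with q
  rw [← integral_indicator measurableSet_Icc]
  rfl

lemma v_integrable {v : ℝ → ℝ → ℝ} (hv : Measurable (Function.uncurry v)) {M s : ℝ}
    (hM : ∀ᵐ x ∂mu01, |v x s| ≤ M) : Integrable (fun x => v x s) mu01 := by
  have h : Measurable (fun x => v x s) := hv.comp (f := fun x : ℝ => (x, s)) (by fun_prop)
  exact Integrable.of_bound h.aestronglyMeasurable M hM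

lemma K_integrable {K v : ℝ → ℝ → ℝ} (hK : Measurable (Function.uncurry K))
    (hK1 : ∀ x y, |K x y| ≤ 1) {s : ℝ} (h : Integrable (fun x => v x s) mu01) (x : ℝ) :
    Integrable (fun y => K x y * (v y s - v x s)) mu01 := by
  have hm : Measurable (fun y => K x y) := hK.comp (f := fun y : ℝ => (x, y)) (by fun_prop)
  exact (h.sub (integrable_const _)).bdd_mul hm.aestronglyMeasurable (ae_of_all _ (hK1 x))

lemma vF_bound {K v : ℝ → ℝ → ℝ} (hK1 : ∀ x y, |K x y| ≤ 1) {M s : ℝ}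
    (hM : ∀ᵐ x ∂mu01, |v x s| ≤ M) : ∀ᵐ x ∂mu01, |vF K v x s| ≤ 2 * M := by
  filter_upwards [hM] with x hx
  have : ∀ᵐ y ∂mu01, ‖K x y * (v y s - v x s)‖ ≤ 2 * M := by
    filter_upwards [hM] with y hy
    rw [Real.norm_eq_abs, abs_mul]
    have h1 := hK1 x y
    have h2 : |v y s - v x s| ≤ 2 * M := (abs_sub _ _).trans (by linarith)
    nlinarith [abs_nonneg (K x y), abs_nonneg (v y s - v x s)]
  have h := norm_integral_le_of_norm_le_const this
  simpa [vF, mu01] using h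

lemma vF_integrable {K v : ℝ → ℝ → ℝ} (hK : Measurable (Function.uncurry K))
    (hK1 : ∀ x y, |K x y| ≤ 1) (hv : Measurable (Function.uncurry v)) {M t : ℝ}
    (hM : ∀ s ∈ Set.Icc (0:ℝ) t, ∀ᵐ x ∂mu01, |v x s| ≤ M) :
    Integrable (Function.uncurry (vF K v)) (mu01.prod (volume.restrict (Set.Icc (0:ℝ) t))) := by
  have hm := vF_meas K v hK hv
  refine Integrable.of_bound hm.aestronglyMeasurable (2 * M) ?_
  have hs : MeasurableSet {q : ℝ × ℝ | ‖Function.uncurry (vF K v) q‖ ≤ 2 * M} :=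
    measurableSet_le hm.norm measurable_const
  rw [Measure.ae_prod_iff_ae_ae hs]
  rw [Measure.ae_ae_comm hs]
  exact ae_restrict_of_forall_mem measurableSet_Icc fun s hs => vF_bound hK1 (hM s hs)

lemma vF_mean {K v : ℝ → ℝ → ℝ} (hK : Measurable (Function.uncurry K))
    (hK1 : ∀ x y, |K x y| ≤ 1) (hKs : ∀ x y, K x y = K y x)
    (hv : Measurable (Function.uncurry v)) {s : ℝ}
    (h : Integrable (fun x => v x s) mu01) : ∫ x, vF K v x s ∂mu01 = 0 := by
  have hint : Integrable (Function.uncurry fun x y => K x y * (v y s - v x s))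
      (mu01.prod mu01) := by
    have := (h.comp_snd mu01).sub (h.comp_fst mu01)
    exact this.bdd_mul hK.aestronglyMeasurable (ae_of_all _ fun q => hK1 q.1 q.2)
  have h1 := integral_integral_swap hint
  have h2 : ∫ y, ∫ x, K x y * (v y s - v x s) ∂mu01 ∂mu01 =
      - ∫ x, ∫ y, K x y * (v y s - v x s) ∂mu01 ∂mu01 := by
    rw [← integral_neg]
    congr 1; ext a
    rw [← integral_neg]
    congr 1; ext b
    rw [hKs b a]; ring
  change ∫ x, ∫ y, K x y * (v y s - v x s) ∂mu01 ∂mu01 = 0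
  linarith

/-- Small-worlds reduction: the solution for the graphon
`W_p = (1−p)W + p(1−W)` with zero-mean initial condition is `e^{−pt}` times the
solution for `(1−2p)W`; hence consensus for the latter implies consensus for the
former. -/
theorem small_world_reduction (W : ℝ → ℝ → ℝ) (hW : IsGraphon W)
    (p : ℝ) (hp : p ∈ Set.Ioo (0:ℝ) (1 / 2))
    (g : ℝ → ℝ) (hg : IsLinf g)
    (hg0 : ∫ y in Set.Icc (0:ℝ) 1, g y = 0)
    (v : ℝ → ℝ → ℝ)
    (hv : IsSolution (fun x y => (1 - 2 * p) * W x y) g v) :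
    IsSolution (fun x y => (1 - p) * W x y + p * (1 - W x y)) g
      (fun x t => Real.exp (-p * t) * v x t) ∧
    (ReachesConsensusOn v (Set.Icc (0:ℝ) 1) →
      ReachesConsensusOn (fun x t => Real.exp (-p * t) * v x t) (Set.Icc (0:ℝ) 1)) := by
  obtain ⟨hWm, hWs, hW1⟩ := hW
  obtain ⟨hp0, hp1⟩ := hp
  obtain ⟨hvm, hvb, hve⟩ := hv
  set K : ℝ → ℝ → ℝ := fun x y => (1 - 2 * p) * W x y with hKdef
  have hK : Measurable (Function.uncurry K) := hWm.const_mul (1 - 2 * p)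
  have hKs : ∀ x y, K x y = K y x := fun x y => by simp only [hKdef]; rw [hWs]
  have hK1 : ∀ x y, |K x y| ≤ 1 := fun x y => by
    have := hW1 x y
    rw [abs_le]; simp only [hKdef]
    constructor <;> nlinarith [this.1, this.2]
  have hbd : ∀ t ≥ (0:ℝ), ∃ M : ℝ, ∀ s ∈ Set.Icc (0:ℝ) t, ∀ᵐ x ∂mu01, |v x s| ≤ M := by
    intro t ht
    obtain ⟨M, hM⟩ := hvb (t + 1) (by linarith)
    exact ⟨M, fun s hs => hM s ⟨hs.1, by linarith [hs.2]⟩⟩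
  have hvi : ∀ s ≥ (0:ℝ), Integrable (fun x => v x s) mu01 := by
    intro s hs
    obtain ⟨M, hM⟩ := hbd s hs
    exact v_integrable hvm (hM s ⟨hs, le_refl _⟩)
  have hgi : Integrable g mu01 := by
    obtain ⟨hgm, M, hM⟩ := hg
    exact Integrable.of_bound hgm.aestronglyMeasurable M hM
  have hve' : ∀ t ≥ (0:ℝ), ∀ᵐ x ∂mu01,
      v x t = g x + ∫ s in Set.Icc (0:ℝ) t, vF K v x s := hve
  have hFi : ∀ t ≥ (0:ℝ), Integrable (Function.uncurry (vF K v))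
      (mu01.prod (volume.restrict (Set.Icc (0:ℝ) t))) := by
    intro t ht
    obtain ⟨M, hM⟩ := hbd t ht
    exact vF_integrable hK hK1 hvm hM
  have hmean : ∀ t ≥ (0:ℝ), ∫ y, v y t ∂mu01 = 0 := by
    intro t ht
    have hL : Integrable (fun x => ∫ s in Set.Icc (0:ℝ) t, vF K v x s) mu01 :=
      (hFi t ht).integral_prod_left
    rw [integral_congr_ae (hve' t ht), integral_add hgi hL,
      integral_integral_swap (hFi t ht)]
    have h1 : ∫ y, g y ∂mu01 = 0 := hg0
    rw [h1, zero_add]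
    exact setIntegral_eq_zero_of_forall_eq_zero
      fun s hs => vF_mean hK hK1 hKs hvm (hvi s hs.1)
  refine ⟨⟨?_, ?_, ?_⟩, ?_⟩
  · have h1 : Measurable (fun q : ℝ × ℝ => Real.exp (-p * q.2)) := by fun_prop
    exact h1.mul hvm
  · intro T hT
    obtain ⟨M, hM⟩ := hvb T hT
    refine ⟨M, fun t ht => ?_⟩
    filter_upwards [hM t ht] with x hx
    have h1 : Real.exp (-p * t) ≤ 1 := Real.exp_le_one_iff.2 (by nlinarith [ht.1])
    rw [abs_mul, abs_of_pos (Real.exp_pos _)]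
    nlinarith [abs_nonneg (v x t), Real.exp_pos (-p * t)]
  · intro t ht
    have hae : ∀ᵐ x ∂mu01, ∀ᵐ s ∂(volume.restrict (Set.Icc (0:ℝ) t)),
        v x s = g x + ∫ r in Set.Icc (0:ℝ) s, vF K v x r := by
      have hms : MeasurableSet {q : ℝ × ℝ |
          v q.1 q.2 = g q.1 + ∫ r in Set.Icc (0:ℝ) q.2, vF K v q.1 r} :=
        measurableSet_eq_fun hvm
          ((hg.1.comp measurable_fst).add (vInt_meas _ (vF_meas K v hK hvm)))
      rw [Measure.ae_ae_comm hms]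
      exact ae_restrict_of_forall_mem measurableSet_Icc fun s hs => hve' s hs.1
    filter_upwards [hae, hve' t ht, (hFi t ht).prod_right_ae] with x hx hxt hxi
    have hib := ibp_aux p (g x) t ht (vF K v x) hxi
    rw [hxt, hib]
    congr 1
    apply integral_congr_ae
    filter_upwards [hx, ae_restrict_mem measurableSet_Icc] with s hs hst
    rw [← hs]
    have hi := hvi s hst.1
    have hm := hmean s hst.1
    have e1 : ∀ y, ((1 - p) * W x y + p * (1 - W x y)) *
        (Real.exp (-p * s) * v y s - Real.exp (-p * s) * v x s) =
        Real.exp (-p * s) * (K x y * (v y s - v x s) + p * (v y s - v x s)) := by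
      intro y; simp only [hKdef]; ring
    have e2 : ∫ y, Real.exp (-p * s) * (K x y * (v y s - v x s) + p * (v y s - v x s)) ∂mu01
        = Real.exp (-p * s) * (vF K v x s - p * v x s) := by
      have hJ : Integrable (fun y => p * (v y s - v x s)) mu01 :=
        (hi.sub (integrable_const _)).const_mul p
      have hV : ∫ y, K x y * (v y s - v x s) ∂mu01 = vF K v x s := rfl
      rw [integral_const_mul, integral_add (K_integrable hK hK1 hi x) hJ, integral_const_mul,
        integral_sub hi (integrable_const _), hm, hV]
      simp
      ring
    simp only [e1]
    exact e2.symm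
  · intro hc ε hε
    obtain ⟨T, hT⟩ := hc ε hε
    refine ⟨max T 0, fun t ht => ?_⟩
    have ht0 : 0 ≤ t := (le_max_right _ _).trans ht
    filter_upwards [hT t ((le_max_left _ _).trans ht)] with q hq
    have h1 : Real.exp (-p * t) ≤ 1 := Real.exp_le_one_iff.2 (by nlinarith)
    rw [← mul_sub, abs_mul, abs_of_pos (Real.exp_pos _)]
    nlinarith [abs_nonneg (v q.1 t - v q.2 t), Real.exp_pos (-p * t)]


end
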